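/- arXiv:2001.11289 — 2 statements merged into one kernel-verified Lean document; each statement's English description precedes it below -/
import Mathlib

section
/- Let K ⊆ ℝⁿ be a compact, connected set with positive Lebesgue measure satisfying Assumption 1, and let f be a real polynomial in n variables. Then there exist a constant C > 0 and r₀ ∈ ℕ such that for all r ≥ r₀, f^(r) − f_min ≤ C·(log r)²/r². -/
open MeasureTheory Polynomial Set

noncomputable section

/-- `Σ[x]_r`: n-variate polynomials that are finite sums of squares of
polynomials of (total) degree at most `r`. -/
def MvIsSOSUpTo {n : ℕ} (σ : MvPolynomial (Fin n) ℝ) (r : ℕ) : Prop :=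
  ∃ (m : ℕ) (p : Fin m → MvPolynomial (Fin n) ℝ),
    (∀ i, (p i).totalDegree ≤ r) ∧ σ = ∑ i, (p i) ^ 2

/-- The Lasserre upper bound `f^(r)` on `K` (with respect to the Lebesgue
measure restricted to `K`). -/
def lasserreBound {n : ℕ} (K : Set (EuclideanSpace ℝ (Fin n)))
    (f : MvPolynomial (Fin n) ℝ) (r : ℕ) : ℝ :=
  sInf { v : ℝ | ∃ σ : MvPolynomial (Fin n) ℝ, MvIsSOSUpTo σ r ∧
    (∫ x in K, MvPolynomial.eval (fun i => x i) σ) = 1 ∧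
    v = ∫ x in K, MvPolynomial.eval (fun i => x i) f * MvPolynomial.eval (fun i => x i) σ }

/-- Assumption 1: there are `ε_K, η_K > 0` and `N ≥ n` such that
`vol(K ∩ B_δ(x)) ≥ η_K δ^N vol(Bⁿ)` for all `x ∈ K` and `0 < δ ≤ ε_K`. -/
def Assumption1 {n : ℕ} (K : Set (EuclideanSpace ℝ (Fin n))) : Prop :=
  ∃ εK ηK N : ℝ, 0 < εK ∧ 0 < ηK ∧ (n : ℝ) ≤ N ∧
    ∀ x ∈ K, ∀ δ : ℝ, 0 < δ → δ ≤ εK →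
      ENNReal.ofReal (ηK * δ ^ N) * volume (Metric.ball (0 : EuclideanSpace ℝ (Fin n)) 1)
        ≤ volume (K ∩ Metric.closedBall x δ)

/-!
Let `m` be the minimum of `f` on `K` and suppose `f ≤ m + M` there. Compose `f - m` with a
Chebyshev polynomial of degree `d` proportional to `r`, rescaled so that the square of the
result is at most `1` where `f - m ≥ 2Mθ²` and at least `exp (2dθ) / 4` where `f - m ≤ Mθ²`. The
normalized square is a density that concentrates on `{f - m ≤ 2Mθ²}`, up to an error of order
`exp (-2dθ) / vol {f - m ≤ Mθ²}`. As `f` is Lipschitz at a minimizer, Assumption 1 bounds this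
volume below by a power of `θ`, so with `θ` a large multiple of `log r / r` the error is
`O(1 / r²)` and the leading term is `2Mθ² = O(log² r / r²)`.
-/

open Filter Topology

section ChebyshevPeak

lemma cosh_le_one_add_sq {x : ℝ} (hx : |x| ≤ 1) : Real.cosh x ≤ 1 + x ^ 2 := by
  have hx2 : x ^ 2 ≤ 1 := (sq_le_one_iff_abs_le_one x).2 hx
  calc Real.cosh x ≤ Real.exp (x ^ 2 / 2) := Real.cosh_le_exp_half_sq x
    _ ≤ 1 / (1 - x ^ 2 / 2) :=
      Real.exp_bound_div_one_sub_of_interval (by positivity) (by linarith)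
    _ ≤ 1 + x ^ 2 := by
      rw [div_le_iff₀ (by linarith)]
      nlinarith [sq_nonneg x]

lemma half_exp_le_eval_T_of_cosh_le {θ y : ℝ} (hθ : 0 ≤ θ) (hy : Real.cosh θ ≤ y) (d : ℕ) :
    Real.exp (d * θ) / 2 ≤ (Chebyshev.T ℝ d).eval y := by
  have hy1 : 1 ≤ y := (Real.one_le_cosh θ).trans hy
  have hφ : θ ≤ Real.arcosh y := by
    rw [← Real.cosh_arcosh hy1, Real.cosh_le_cosh] at hy
    simpa only [abs_of_nonneg hθ, abs_of_nonneg (Real.arcosh_nonneg hy1)] using hy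
  calc Real.exp (d * θ) / 2 ≤ Real.cosh (d * θ) := by
        rw [Real.cosh_eq]
        linarith [Real.exp_pos (-(d * θ))]
    _ ≤ Real.cosh (d * Real.arcosh y) := by
        rw [Real.cosh_le_cosh, abs_of_nonneg (by positivity),
          abs_of_nonneg (mul_nonneg d.cast_nonneg (Real.arcosh_nonneg hy1))]
        gcongr
    _ = (Chebyshev.T ℝ d).eval y := by
        rw [← Int.cast_natCast, ← Chebyshev.T_real_cosh, Real.cosh_arcosh hy1]

/-- The polynomial `T_d (1 + 2θ² - t / M)` in `t`, which peaks at the left end of `[0, M]`: the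
argument of `T_d` lies in `[-1, 1]` for `2Mθ² ≤ t ≤ M` and is at least `1 + θ² ≥ cosh θ` for
`t ≤ Mθ²`. -/
def chebyshevPeak (M θ : ℝ) (d : ℕ) : ℝ[X] :=
  (Chebyshev.T ℝ d).comp (C (1 + 2 * θ ^ 2) - C M⁻¹ * X)

lemma eval_chebyshevPeak (M θ : ℝ) (d : ℕ) (t : ℝ) :
    (chebyshevPeak M θ d).eval t = (Chebyshev.T ℝ d).eval (1 + 2 * θ ^ 2 - t / M) := by
  simp only [chebyshevPeak, eval_comp, eval_sub, eval_mul, eval_C, eval_X, inv_mul_eq_div]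

lemma natDegree_chebyshevPeak_le (M θ : ℝ) (d : ℕ) : (chebyshevPeak M θ d).natDegree ≤ d := by
  have hlin : (C (1 + 2 * θ ^ 2) - C M⁻¹ * X : ℝ[X]).natDegree ≤ 1 := by compute_degree
  calc (chebyshevPeak M θ d).natDegree
      ≤ (Chebyshev.T ℝ d).natDegree * (C (1 + 2 * θ ^ 2) - C M⁻¹ * X : ℝ[X]).natDegree :=
        natDegree_comp_le
    _ ≤ d * 1 := by
        rw [Chebyshev.natDegree_T, Int.natAbs_natCast]
        gcongr
    _ = d := mul_one d

lemma eval_chebyshevPeak_sq_le_one {M θ t : ℝ} (hM : 0 < M) (d : ℕ)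
    (ht : 2 * M * θ ^ 2 ≤ t) (htM : t ≤ M) : (chebyshevPeak M θ d).eval t ^ 2 ≤ 1 := by
  have hlow : 2 * θ ^ 2 ≤ t / M := by rw [le_div_iff₀ hM]; linarith
  have hup : t / M ≤ 1 := (div_le_one hM).2 htM
  rw [eval_chebyshevPeak, sq_le_one_iff_abs_le_one]
  exact Chebyshev.abs_eval_T_real_le_one _
    (abs_le.2 ⟨by linarith [sq_nonneg θ], by linarith⟩)

lemma half_exp_le_eval_chebyshevPeak {M θ t : ℝ} (hM : 0 < M) (hθ : 0 ≤ θ) (hθ1 : θ ≤ 1) (d : ℕ)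
    (ht : t ≤ M * θ ^ 2) : Real.exp (d * θ) / 2 ≤ (chebyshevPeak M θ d).eval t := by
  have htM : t / M ≤ θ ^ 2 := (div_le_iff₀' hM).2 ht
  rw [eval_chebyshevPeak]
  refine half_exp_le_eval_T_of_cosh_le hθ ?_ d
  linarith [cosh_le_one_add_sq ((abs_of_nonneg hθ).trans_le hθ1)]

end ChebyshevPeak

section PolynomialFunctions

lemma totalDegree_aeval_le {σ R : Type*} [CommSemiring R] (g : MvPolynomial σ R) (q : R[X]) :
    (aeval g q).totalDegree ≤ q.natDegree * g.totalDegree := by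
  rw [aeval_eq_sum_range]
  refine MvPolynomial.totalDegree_finsetSum_le fun i hi => ?_
  calc (q.coeff i • g ^ i).totalDegree ≤ (g ^ i).totalDegree := MvPolynomial.totalDegree_smul_le _ _
    _ ≤ i * g.totalDegree := MvPolynomial.totalDegree_pow _ _
    _ ≤ q.natDegree * g.totalDegree := by
      gcongr
      exact Finset.mem_range_succ_iff.1 hi

lemma eval_aeval_eq_eval_eval {σ R : Type*} [CommSemiring R] (x : σ → R) (g : MvPolynomial σ R)
    (q : R[X]) : MvPolynomial.eval x (aeval g q) = q.eval (MvPolynomial.eval x g) :=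
  (aeval_algHom_apply (MvPolynomial.aeval x) g q).symm

variable {n : ℕ}

lemma continuous_eval_euclidean (f : MvPolynomial (Fin n) ℝ) :
    Continuous fun x : EuclideanSpace ℝ (Fin n) => MvPolynomial.eval (fun i => x i) f :=
  (MvPolynomial.continuous_eval f).comp (by fun_prop)

lemma differentiable_eval_euclidean (f : MvPolynomial (Fin n) ℝ) :
    Differentiable ℝ fun x : EuclideanSpace ℝ (Fin n) => MvPolynomial.eval (fun i => x i) f := by
  intro x
  have hcoord (i : Fin n) : AnalyticAt ℝ (fun y : EuclideanSpace ℝ (Fin n) => y i) x :=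
    (EuclideanSpace.proj (𝕜 := ℝ) i).analyticAt x
  simpa only [MvPolynomial.aeval_eq_eval] using
    (AnalyticAt.aeval_mvPolynomial hcoord f).differentiableAt

end PolynomialFunctions

section MeasureEstimates

lemma integral_mul_le_mul_integral_add {α : Type*} [MeasurableSpace α] {μ : Measure α}
    [IsFiniteMeasure μ] {u w : α → ℝ} {h M : ℝ} (hw : Integrable w μ)
    (huw : Integrable (fun x => u x * w x) μ) (hM : 0 ≤ M) (hw0 : 0 ≤ᵐ[μ] w)
    (huM : ∀ᵐ x ∂μ, u x ≤ h + M) (hw1 : ∀ᵐ x ∂μ, h ≤ u x → w x ≤ 1) :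
    ∫ x, u x * w x ∂μ ≤ h * (∫ x, w x ∂μ) + M * μ.real univ := by
  have hpt : ∀ᵐ x ∂μ, u x * w x ≤ h * w x + M := by
    filter_upwards [hw0, huM, hw1] with x (hw0x : 0 ≤ w x) hux hwx
    rcases le_total (u x) h with hlow | hhigh
    · nlinarith
    · nlinarith [hwx hhigh]
  calc ∫ x, u x * w x ∂μ ≤ ∫ x, (h * w x + M) ∂μ :=
        integral_mono_ae huw ((hw.const_mul h).add (integrable_const M)) hpt
    _ = h * (∫ x, w x ∂μ) + M * μ.real univ := by
        rw [integral_add (hw.const_mul h) (integrable_const M), integral_const_mul,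
          integral_const, smul_eq_mul, mul_comm M]

lemma exists_mul_rpow_le_measureReal_sublevel {X : Type*} [PseudoMetricSpace X]
    [MeasurableSpace X] {μ : Measure X} {K : Set X} {f : X → ℝ} {a : X} {ε η N : ℝ}
    (hK : μ K ≠ ⊤) (hf : (fun x => f x - f a) =O[𝓝 a] fun x => dist x a)
    (hε : 0 < ε) (hη : 0 < η)
    (hball : ∀ δ, 0 < δ → δ ≤ ε → η * δ ^ N ≤ μ.real (K ∩ Metric.closedBall a δ)) :
    ∃ c > 0, ∃ h₀ > 0, ∀ h, 0 < h → h ≤ h₀ → c * h ^ N ≤ μ.real (K ∩ {x | f x - f a ≤ h}) := by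
  obtain ⟨L, hL, hLip⟩ := hf.exists_pos
  obtain ⟨ρ, hρ, hLipρ⟩ := Metric.eventually_nhds_iff.1 (Asymptotics.isBigOWith_iff.1 hLip)
  refine ⟨η / L ^ N, by positivity, L * min ε (ρ / 2), by positivity, fun h hh hh₀ => ?_⟩
  have hδ : h / L ≤ min ε (ρ / 2) := (div_le_iff₀' hL).2 hh₀
  have hsub : K ∩ Metric.closedBall a (h / L) ⊆ K ∩ {x | f x - f a ≤ h} := by
    rintro x ⟨hxK, hxa⟩
    have hxρ : dist x a < ρ := by
      linarith [Metric.mem_closedBall.1 hxa, hδ.trans (min_le_right _ _)]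
    refine ⟨hxK, ?_⟩
    calc f x - f a ≤ L * ‖dist x a‖ := (le_abs_self _).trans (hLipρ hxρ)
      _ = L * dist x a := by rw [Real.norm_of_nonneg dist_nonneg]
      _ ≤ h := (le_div_iff₀' hL).1 hxa
  calc η / L ^ N * h ^ N = η * (h / L) ^ N := by rw [Real.div_rpow hh.le hL.le]; ring
    _ ≤ μ.real (K ∩ Metric.closedBall a (h / L)) :=
      hball _ (by positivity) (hδ.trans (min_le_left _ _))
    _ ≤ μ.real (K ∩ {x | f x - f a ≤ h}) :=
      measureReal_mono hsub (measure_ne_top_of_subset inter_subset_left hK)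

lemma Assumption1.exists_mul_rpow_le_measureReal {n : ℕ} {K : Set (EuclideanSpace ℝ (Fin n))}
    (hK1 : Assumption1 K) (hK : volume K ≠ ⊤) :
    ∃ ε > 0, ∃ η > 0, ∃ N : ℝ, 0 ≤ N ∧ ∀ x ∈ K, ∀ δ, 0 < δ → δ ≤ ε →
      η * δ ^ N ≤ volume.real (K ∩ Metric.closedBall x δ) := by
  obtain ⟨ε, η, N, hε, hη, hnN, hball⟩ := hK1
  have hunit : 0 < volume.real (Metric.ball (0 : EuclideanSpace ℝ (Fin n)) 1) :=
    ENNReal.toReal_pos (Metric.measure_ball_pos _ _ one_pos).ne' measure_ball_lt_top.ne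
  refine ⟨ε, hε, η * volume.real (Metric.ball (0 : EuclideanSpace ℝ (Fin n)) 1), by positivity,
    N, n.cast_nonneg.trans hnN, fun x hx δ hδ hδε => ?_⟩
  have hreal := ENNReal.toReal_mono (measure_ne_top_of_subset inter_subset_left hK)
    (hball x hx δ hδ hδε)
  rwa [ENNReal.toReal_mul, ENNReal.toReal_ofReal (by positivity), mul_right_comm] at hreal

end MeasureEstimates

section LasserreBound

variable {n : ℕ} {K : Set (EuclideanSpace ℝ (Fin n))} {f : MvPolynomial (Fin n) ℝ}

lemma mvIsSOSUpTo_sq {p : MvPolynomial (Fin n) ℝ} {r : ℕ} (hp : p.totalDegree ≤ r) :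
    MvIsSOSUpTo (p ^ 2) r :=
  ⟨1, fun _ => p, fun _ => hp, by simp⟩

lemma MvIsSOSUpTo.eval_nonneg {σ : MvPolynomial (Fin n) ℝ} {r : ℕ} (hσ : MvIsSOSUpTo σ r)
    (x : Fin n → ℝ) : 0 ≤ MvPolynomial.eval x σ := by
  obtain ⟨k, p, -, rfl⟩ := hσ
  simp only [map_sum, map_pow]
  positivity

lemma lasserreBound_le_integral (hK : IsCompact K) {σ : MvPolynomial (Fin n) ℝ} {r : ℕ}
    (hσ : MvIsSOSUpTo σ r) (hσ1 : ∫ x in K, MvPolynomial.eval (fun i => x i) σ = 1) :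
    lasserreBound K f r ≤
      ∫ x in K, MvPolynomial.eval (fun i => x i) f * MvPolynomial.eval (fun i => x i) σ := by
  obtain ⟨m, hm⟩ := hK.bddBelow_image (continuous_eval_euclidean f).continuousOn
  refine csInf_le ⟨m, ?_⟩ ⟨σ, hσ, hσ1, rfl⟩
  rintro v ⟨τ, hτ, hτ1, rfl⟩
  calc m = ∫ x in K, m * MvPolynomial.eval (fun i => x i) τ := by
        rw [integral_const_mul, hτ1, mul_one]
    _ ≤ ∫ x in K, MvPolynomial.eval (fun i => x i) f * MvPolynomial.eval (fun i => x i) τ := by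
        have hτc := continuous_eval_euclidean τ
        exact setIntegral_mono_on ((hτc.const_mul m).continuousOn.integrableOn_compact hK)
          (((continuous_eval_euclidean f).mul hτc).continuousOn.integrableOn_compact hK)
          hK.measurableSet
          fun x hx => mul_le_mul_of_nonneg_right (hm ⟨x, hx, rfl⟩) (hτ.eval_nonneg _)

lemma lasserreBound_le_integral_div_integral (hK : IsCompact K) {p : MvPolynomial (Fin n) ℝ}
    {r : ℕ} (hp : p.totalDegree ≤ r)
    (hI : 0 < ∫ x in K, MvPolynomial.eval (fun i => x i) p ^ 2) :
    lasserreBound K f r ≤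
      (∫ x in K, MvPolynomial.eval (fun i => x i) f * MvPolynomial.eval (fun i => x i) p ^ 2) /
        ∫ x in K, MvPolynomial.eval (fun i => x i) p ^ 2 := by
  set I := ∫ x in K, MvPolynomial.eval (fun i => x i) p ^ 2
  have hdeg : (MvPolynomial.C (√I)⁻¹ * p).totalDegree ≤ r := by
    refine (MvPolynomial.totalDegree_mul _ _).trans ?_
    rwa [MvPolynomial.totalDegree_C, zero_add]
  have heval (x : EuclideanSpace ℝ (Fin n)) :
      MvPolynomial.eval (fun i => x i) ((MvPolynomial.C (√I)⁻¹ * p) ^ 2) =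
        I⁻¹ * MvPolynomial.eval (fun i => x i) p ^ 2 := by
    rw [map_pow, map_mul, MvPolynomial.eval_C, mul_pow, inv_pow, Real.sq_sqrt hI.le]
  have hbound := lasserreBound_le_integral (f := f) hK (mvIsSOSUpTo_sq hdeg)
    (by simp_rw [heval, integral_const_mul]; exact inv_mul_cancel₀ hI.ne')
  simp_rw [heval, mul_left_comm _ I⁻¹, integral_const_mul] at hbound
  rwa [inv_mul_eq_div] at hbound

lemma lasserreBound_le_of_peak (hK : IsCompact K) {p : MvPolynomial (Fin n) ℝ} {r : ℕ}
    (hp : p.totalDegree ≤ r) {h M B v : ℝ} (hM : 0 ≤ M)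
    (hfM : ∀ x ∈ K, MvPolynomial.eval (fun i => x i) f ≤ h + M)
    (hp1 : ∀ x ∈ K, h ≤ MvPolynomial.eval (fun i => x i) f →
      MvPolynomial.eval (fun i => x i) p ^ 2 ≤ 1)
    (hB : 0 < B) (hv : 0 < v)
    (hvol : v ≤ volume.real (K ∩ {x | B ≤ MvPolynomial.eval (fun i => x i) p ^ 2})) :
    lasserreBound K f r ≤ h + M * volume.real K / (B * v) := by
  set I := ∫ x in K, MvPolynomial.eval (fun i => x i) p ^ 2
  have hint : IntegrableOn (fun x => MvPolynomial.eval (fun i => x i) p ^ 2) K :=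
    ((continuous_eval_euclidean p).pow 2).continuousOn.integrableOn_compact hK
  have hfint : IntegrableOn (fun x => MvPolynomial.eval (fun i => x i) f *
      MvPolynomial.eval (fun i => x i) p ^ 2) K :=
    ((continuous_eval_euclidean f).mul
      ((continuous_eval_euclidean p).pow 2)).continuousOn.integrableOn_compact hK
  have : IsFiniteMeasure (volume.restrict K) :=
    isFiniteMeasure_restrict.2 hK.measure_lt_top.ne
  have hpeak : B * v ≤ I := by
    refine le_trans ?_
      (mul_meas_ge_le_integral_of_nonneg (.of_forall fun x => sq_nonneg _) hint B)
    rw [measureReal_restrict_apply' hK.measurableSet, inter_comm]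
    gcongr
  have hI : 0 < I := (mul_pos hB hv).trans_le hpeak
  have htail : ∫ x in K, MvPolynomial.eval (fun i => x i) f *
      MvPolynomial.eval (fun i => x i) p ^ 2 ≤ h * I + M * volume.real K := by
    rw [← measureReal_restrict_apply_univ]
    exact integral_mul_le_mul_integral_add hint hfint hM (.of_forall fun x => sq_nonneg _)
      (ae_restrict_of_forall_mem hK.measurableSet hfM)
      (ae_restrict_of_forall_mem hK.measurableSet hp1)
  calc lasserreBound K f r ≤ (∫ x in K, MvPolynomial.eval (fun i => x i) f *
        MvPolynomial.eval (fun i => x i) p ^ 2) / I :=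
        lasserreBound_le_integral_div_integral hK hp hI
    _ ≤ (h * I + M * volume.real K) / I := by gcongr
    _ = h + M * volume.real K / I := by field_simp
    _ ≤ h + M * volume.real K / (B * v) := by gcongr

lemma lasserreBound_le_of_le_volume_sublevel (hK : IsCompact K) {m M θ v : ℝ} {d r : ℕ}
    (hM : 0 < M) (hfM : ∀ x ∈ K, MvPolynomial.eval (fun i => x i) f ≤ m + M)
    (hθ : 0 ≤ θ) (hθ1 : θ ≤ 1) (hd : d * f.totalDegree ≤ r) (hv : 0 < v)
    (hvol : v ≤ volume.real (K ∩ {x | MvPolynomial.eval (fun i => x i) f - m ≤ M * θ ^ 2})) :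
    lasserreBound K f r ≤
      m + 2 * M * θ ^ 2 + M * volume.real K / ((Real.exp (d * θ) / 2) ^ 2 * v) := by
  set p := aeval (f - MvPolynomial.C m) (chebyshevPeak M θ d) with hp
  have hpeval (x : EuclideanSpace ℝ (Fin n)) : MvPolynomial.eval (fun i => x i) p =
      (chebyshevPeak M θ d).eval (MvPolynomial.eval (fun i => x i) f - m) := by
    rw [hp, eval_aeval_eq_eval_eval, map_sub, MvPolynomial.eval_C]
  have hpdeg : p.totalDegree ≤ r :=
    (totalDegree_aeval_le _ _).trans <| (Nat.mul_le_mul (natDegree_chebyshevPeak_le M θ d)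
      (MvPolynomial.totalDegree_sub_C_le f m)).trans hd
  refine lasserreBound_le_of_peak hK hpdeg hM.le (fun x hx => ?_) (fun x hx hlow => ?_)
    (by positivity) hv (hvol.trans (measureReal_mono (fun x hx => ⟨hx.1, ?_⟩)
      (measure_ne_top_of_subset inter_subset_left hK.measure_lt_top.ne)))
  · nlinarith [hfM x hx, mul_nonneg hM.le (sq_nonneg θ)]
  · rw [hpeval]
    exact eval_chebyshevPeak_sq_le_one hM d (by linarith) (by linarith [hfM x hx])
  · change (Real.exp (d * θ) / 2) ^ 2 ≤ MvPolynomial.eval (fun i => x i) p ^ 2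
    rw [hpeval]
    gcongr
    exact half_exp_le_eval_chebyshevPeak hM hθ hθ1 d hx.2

end LasserreBound

section Rate

lemma sq_le_rpow_mul_exp_sq {r θ s N : ℝ} (hr : 0 < r) (hN : 0 ≤ N) (hθ : 1 / r ≤ θ)
    (hs : (N + 1) * Real.log r ≤ s) : r ^ 2 ≤ (θ ^ 2) ^ N * Real.exp s ^ 2 := by
  have hexp : r ^ N * r ≤ Real.exp s := by
    rw [← Real.rpow_add_one hr.ne', Real.rpow_def_of_pos hr, mul_comm]
    exact Real.exp_le_exp.2 hs
  calc r ^ 2 = ((1 / r) ^ 2) ^ N * (r ^ N * r) ^ 2 := by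
        rw [mul_pow, ← mul_assoc, Real.rpow_pow_comm hr.le, ← Real.mul_rpow (by positivity)
          (by positivity), ← mul_pow, one_div_mul_cancel hr.ne', one_pow, Real.one_rpow, one_mul]
    _ ≤ (θ ^ 2) ^ N * Real.exp s ^ 2 := by gcongr

/-- The width `θ` used at level `r`. The constant makes `exp (d θ) ≥ r ^ (N + 1)` for a Chebyshev
peak of degree `d = r / D`, which outweighs a sublevel volume of order `θ ^ (2 N)` by a factor
`r ^ 2`. -/
def peakWidth (D : ℕ) (N : ℝ) (r : ℕ) : ℝ :=
  2 * D * (N + 1) * (Real.log r / r)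

lemma tendsto_peakWidth (D : ℕ) (N : ℝ) : Tendsto (peakWidth D N) atTop (𝓝 0) := by
  have hlog : Tendsto (fun r : ℕ => Real.log r / r) atTop (𝓝 0) :=
    Real.isLittleO_log_id_atTop.tendsto_div_nhds_zero.comp tendsto_natCast_atTop_atTop
  rw [← mul_zero (2 * D * (N + 1))]
  exact hlog.const_mul _

lemma one_div_le_peakWidth {D r : ℕ} {N : ℝ} (hD : 0 < D) (hN : 0 ≤ N) (hr : 1 ≤ Real.log r) :
    1 / (r : ℝ) ≤ peakWidth D N r := by
  have hD1 : (1 : ℝ) ≤ D := by exact_mod_cast hD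
  rw [peakWidth, ← mul_div_assoc]
  gcongr
  exact one_le_mul_of_one_le_of_one_le (by nlinarith) hr

lemma mul_log_le_div_mul_peakWidth {D r : ℕ} {N : ℝ} (hD : 0 < D) (hN : 0 ≤ N) (hDr : D ≤ r) :
    (N + 1) * Real.log r ≤ (r / D : ℕ) * peakWidth D N r := by
  have hr : (0 : ℝ) < r := by exact_mod_cast hD.trans_le hDr
  have hdiv : (r : ℝ) ≤ 2 * D * (r / D : ℕ) := by
    have hlt : r < D * (r / D + 1) := Nat.lt_mul_div_succ r hD
    have hpos : 1 ≤ r / D := (Nat.one_le_div_iff hD).2 hDr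
    exact_mod_cast (by nlinarith : r ≤ 2 * D * (r / D))
  calc (N + 1) * Real.log r ≤ 2 * D * (r / D : ℕ) / r * ((N + 1) * Real.log r) :=
        le_mul_of_one_le_left (by positivity) ((one_le_div hr).2 hdiv)
    _ = (r / D : ℕ) * peakWidth D N r := by rw [peakWidth]; ring

variable {n : ℕ} {K : Set (EuclideanSpace ℝ (Fin n))} {f : MvPolynomial (Fin n) ℝ}

lemma lasserreBound_le_add_div_sq (hK : IsCompact K) {m M θ c N : ℝ} {d r : ℕ}
    (hM : 0 < M) (hfM : ∀ x ∈ K, MvPolynomial.eval (fun i => x i) f ≤ m + M)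
    (hc : 0 < c) (hN : 0 ≤ N) (hr : 0 < r) (hd : d * f.totalDegree ≤ r)
    (hrθ : 1 / (r : ℝ) ≤ θ) (hθ1 : θ ≤ 1) (hdθ : (N + 1) * Real.log r ≤ d * θ)
    (hvol : c * (M * θ ^ 2) ^ N ≤
      volume.real (K ∩ {x | MvPolynomial.eval (fun i => x i) f - m ≤ M * θ ^ 2})) :
    lasserreBound K f r ≤
      m + 2 * M * θ ^ 2 + 4 * (M * volume.real K) / (c * M ^ N) / (r : ℝ) ^ 2 := by
  have hr' : (0 : ℝ) < r := by exact_mod_cast hr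
  have hθ : 0 < θ := lt_of_lt_of_le (by positivity) hrθ
  have hpeak : c * M ^ N * (r : ℝ) ^ 2 / 4 ≤
      (Real.exp (d * θ) / 2) ^ 2 * (c * (M * θ ^ 2) ^ N) := by
    calc c * M ^ N * (r : ℝ) ^ 2 / 4
        ≤ c * M ^ N * ((θ ^ 2) ^ N * Real.exp (d * θ) ^ 2) / 4 := by
          gcongr
          exact sq_le_rpow_mul_exp_sq hr' hN hrθ hdθ
      _ = (Real.exp (d * θ) / 2) ^ 2 * (c * (M * θ ^ 2) ^ N) := by
          rw [Real.mul_rpow hM.le (by positivity)]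
          ring
  calc lasserreBound K f r
      ≤ m + 2 * M * θ ^ 2 +
          M * volume.real K / ((Real.exp (d * θ) / 2) ^ 2 * (c * (M * θ ^ 2) ^ N)) :=
        lasserreBound_le_of_le_volume_sublevel hK hM hfM hθ.le hθ1 hd (by positivity) hvol
    _ ≤ m + 2 * M * θ ^ 2 + M * volume.real K / (c * M ^ N * (r : ℝ) ^ 2 / 4) := by gcongr
    _ = m + 2 * M * θ ^ 2 + 4 * (M * volume.real K) / (c * M ^ N) / (r : ℝ) ^ 2 := by field_simp

lemma exists_eventually_lasserreBound_sub_le (hK : IsCompact K) {m c h₀ N : ℝ}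
    (hc : 0 < c) (hh₀ : 0 < h₀) (hN : 0 ≤ N)
    (hvol : ∀ h, 0 < h → h ≤ h₀ →
      c * h ^ N ≤ volume.real (K ∩ {x | MvPolynomial.eval (fun i => x i) f - m ≤ h})) :
    ∃ C > 0, ∀ᶠ r : ℕ in atTop,
      lasserreBound K f r - m ≤ C * Real.log r ^ 2 / (r : ℝ) ^ 2 := by
  obtain ⟨M, hM, hfM⟩ : ∃ M > 0, ∀ x ∈ K, MvPolynomial.eval (fun i => x i) f ≤ m + M := by
    obtain ⟨b, hb⟩ := hK.bddAbove_image (continuous_eval_euclidean f).continuousOn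
    refine ⟨max (b - m) 1, by positivity, fun x hx => ?_⟩
    linarith [hb ⟨x, hx, rfl⟩, le_max_left (b - m) 1]
  set D := f.totalDegree + 1
  set A : ℝ := 2 * D * (N + 1)
  set B : ℝ := 4 * (M * volume.real K) / (c * M ^ N)
  have hsublevel : Tendsto (fun r => M * peakWidth D N r ^ 2) atTop (𝓝 0) := by
    simpa using ((tendsto_peakWidth D N).pow 2).const_mul M
  have hlog : ∀ᶠ r : ℕ in atTop, 1 ≤ Real.log r :=
    (Real.tendsto_log_atTop.comp tendsto_natCast_atTop_atTop).eventually_ge_atTop 1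
  refine ⟨2 * M * A ^ 2 + B, by positivity, ?_⟩
  filter_upwards [(tendsto_peakWidth D N).eventually_le_const one_pos,
    hsublevel.eventually_le_const hh₀, hlog, eventually_ge_atTop D] with r hθ1 hθh₀ hlog1 hDr
  have hD : 0 < D := Nat.succ_pos _
  have hr : 0 < r := hD.trans_le hDr
  have hrθ := one_div_le_peakWidth hD hN hlog1
  have hθ : 0 < peakWidth D N r := lt_of_lt_of_le (by positivity) hrθ
  have hdeg : r / D * f.totalDegree ≤ r :=
    (Nat.mul_le_mul_left _ (Nat.le_succ _)).trans (Nat.div_mul_le_self r D)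
  have hbound := lasserreBound_le_add_div_sq hK hM hfM hc hN hr hdeg hrθ hθ1
    (mul_log_le_div_mul_peakWidth hD hN hDr) (hvol _ (by positivity) hθh₀)
  calc lasserreBound K f r - m ≤ 2 * M * peakWidth D N r ^ 2 + B / (r : ℝ) ^ 2 := by linarith
    _ = (2 * M * A ^ 2 * Real.log r ^ 2 + B * 1) / (r : ℝ) ^ 2 := by rw [peakWidth]; ring
    _ ≤ (2 * M * A ^ 2 * Real.log r ^ 2 + B * Real.log r ^ 2) / (r : ℝ) ^ 2 := by
        gcongr
        exact one_le_pow₀ hlog1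
    _ = (2 * M * A ^ 2 + B) * Real.log r ^ 2 / (r : ℝ) ^ 2 := by ring

end Rate

theorem lasserre_bound_convergence_rate_general {n : ℕ} (K : Set (EuclideanSpace ℝ (Fin n)))
    (hKc : IsCompact K) (hKne : K.Nonempty) (hK1 : Assumption1 K) (f : MvPolynomial (Fin n) ℝ) :
    ∃ C > (0 : ℝ), ∃ r₀ : ℕ, ∀ r : ℕ, r₀ ≤ r →
      lasserreBound K f r - sInf ((fun x => MvPolynomial.eval (fun i => x i) f) '' K) ≤
        C * (Real.log r) ^ 2 / (r : ℝ) ^ 2 := by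
  obtain ⟨a, haK, hmin⟩ :=
    hKc.exists_sInf_image_eq hKne (continuous_eval_euclidean f).continuousOn
  have hLip : (fun x : EuclideanSpace ℝ (Fin n) => MvPolynomial.eval (fun i => x i) f -
      MvPolynomial.eval (fun i => a i) f) =O[𝓝 a] fun x => dist x a := by
    simpa only [dist_eq_norm] using
      (differentiable_eval_euclidean f a).hasFDerivAt.isBigO_sub.norm_right
  obtain ⟨ε, hε, η, hη, N, hN, hball⟩ :=
    hK1.exists_mul_rpow_le_measureReal hKc.measure_lt_top.ne
  obtain ⟨c, hc, h₀, hh₀, hvol⟩ :=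
    exists_mul_rpow_le_measureReal_sublevel hKc.measure_lt_top.ne hLip hε hη (hball a haK)
  obtain ⟨C, hC, hrate⟩ := exists_eventually_lasserreBound_sub_le hKc hc hh₀ hN hvol
  rw [hmin]
  exact ⟨C, hC, eventually_atTop.1 hrate⟩

/-- Corollary 1: on a compact connected `K` of positive measure satisfying
Assumption 1, `f^(r) - f_min = O(log² r / r²)`. -/
theorem lasserre_bound_convergence_rate {n : ℕ} (K : Set (EuclideanSpace ℝ (Fin n)))
    (hKc : IsCompact K) (hKconn : IsConnected K) (hKpos : 0 < volume K)
    (hK1 : Assumption1 K) (f : MvPolynomial (Fin n) ℝ) :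
    ∃ C > (0 : ℝ), ∃ r₀ : ℕ, ∀ r : ℕ, r₀ ≤ r →
      lasserreBound K f r - sInf ((fun x => MvPolynomial.eval (fun i => x i) f) '' K) ≤
        C * (Real.log r) ^ 2 / (r : ℝ) ^ 2 :=
  lasserre_bound_convergence_rate_general K hKc hKconn.nonempty hK1 f
end
end

section
/- Let K = [−1, 1] ⊆ ℝ and f(x) = x^(2k) for an integer k ≥ 2 (so f_min = 0). Then the bounds f_pfm^(r) and f^(r) are asymptotically separated: for every M > 0 there exists r₀ ∈ ℕ such that f_pfm^(r) ≥ M·f^(r) for all r ≥ r₀. -/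
open MeasureTheory Polynomial Set

noncomputable section

/-- `Σ[t]_r`: univariate polynomials that are finite sums of squares of
polynomials of degree at most `r`. -/
def IsSOSUpTo (s : Polynomial ℝ) (r : ℕ) : Prop :=
  ∃ (m : ℕ) (p : Fin m → Polynomial ℝ), (∀ i, (p i).natDegree ≤ r) ∧ s = ∑ i, (p i) ^ 2

/-- The Lasserre upper bound `f^(r)` for a univariate polynomial `f` on
`K = [-1,1]`, with respect to the Lebesgue measure restricted to `[-1,1]`. -/
def lasserreBound1 (f : Polynomial ℝ) (r : ℕ) : ℝ :=
  sInf { v : ℝ | ∃ σ : Polynomial ℝ, IsSOSUpTo σ r ∧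
    (∫ x in Icc (-1 : ℝ) 1, σ.eval x) = 1 ∧
    v = ∫ x in Icc (-1 : ℝ) 1, f.eval x * σ.eval x }

/-- The push-forward bound `f_pfm^(r)` for a univariate polynomial `f` on
`K = [-1,1]`, with respect to the Lebesgue measure restricted to `[-1,1]`. -/
def pfmBound1 (f : Polynomial ℝ) (r : ℕ) : ℝ :=
  sInf { v : ℝ | ∃ s : Polynomial ℝ, IsSOSUpTo s r ∧
    (∫ x in Icc (-1 : ℝ) 1, s.eval (f.eval x)) = 1 ∧
    v = ∫ x in Icc (-1 : ℝ) 1, f.eval x * s.eval (f.eval x) }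

/-!
Both bounds are computed up to constants. For `f^(r)` one tests against a multiple of
`(T_N(x) / x)^4`, where `T_N` is a Chebyshev polynomial of odd degree `N` proportional to `r`:
since `|T_N| ≤ 1` on `[-1, 1]` the numerator is bounded, while `T_N(x) / x` is of size `N` on
`(0, 1/N]`, so that `f^(r) = O(r⁻³)` as soon as `f` vanishes to order four at `0`.

Put `b = 2k`. The push-forward of the Lebesgue measure under `x ↦ x^b` is proportional to
`t^(1/b - 1) dt` on `[0, 1]`, and `f_pfm^(r)` is the least value of `∫ t p(t)² / ∫ p(t)²` for this
measure over polynomials `p` of degree at most `r`. A Hardy inequality bounds `∫ p²` by `∫ t p²`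
and `∫ t² (1 - t) p'²`. The latter is the quadratic form of the Jacobi differential operator, which
is self-adjoint for the weight `t^(1/b)` and triangular in the monomial basis; its eigenvalues on
polynomials of degree at most `r` are therefore explicit and of order `r²`. Hence `f_pfm^(r)` is at
least of order `r⁻²`.
-/

/-! ### Sums of squares and the two bounds -/

lemma IsSOSUpTo.sq {p : ℝ[X]} {r : ℕ} (hp : p.natDegree ≤ r) : IsSOSUpTo (p ^ 2) r :=
  ⟨1, fun _ ↦ p, fun _ ↦ hp, by simp⟩

lemma IsSOSUpTo.C_mul {s : ℝ[X]} {r : ℕ} (hs : IsSOSUpTo s r) {c : ℝ} (hc : 0 ≤ c) :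
    IsSOSUpTo (C c * s) r := by
  obtain ⟨m, p, hp, rfl⟩ := hs
  refine ⟨m, fun i ↦ C √c * p i, fun i ↦ (natDegree_C_mul_le _ _).trans (hp i), ?_⟩
  simp only [mul_pow, ← C_pow, Real.sq_sqrt hc, Finset.mul_sum]

lemma IsSOSUpTo.eval_nonneg {s : ℝ[X]} {r : ℕ} (hs : IsSOSUpTo s r) (x : ℝ) : 0 ≤ s.eval x := by
  obtain ⟨m, p, -, rfl⟩ := hs
  simp only [eval_finsetSum, eval_pow]
  exact Finset.sum_nonneg fun i _ ↦ sq_nonneg _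

lemma lasserreBound1_le_div (f : ℝ[X]) {σ : ℝ[X]} {r : ℕ} (hσ : IsSOSUpTo σ r)
    (hpos : 0 < ∫ x in Icc (-1 : ℝ) 1, σ.eval x) :
    lasserreBound1 f r ≤
      (∫ x in Icc (-1 : ℝ) 1, f.eval x * σ.eval x) / ∫ x in Icc (-1 : ℝ) 1, σ.eval x := by
  set I := ∫ x in Icc (-1 : ℝ) 1, σ.eval x
  refine csInf_le ?_ ⟨C I⁻¹ * σ, hσ.C_mul (inv_nonneg.2 hpos.le), ?_, ?_⟩
  · obtain ⟨x₀, -, hx₀⟩ := isCompact_Icc.exists_isMinOn (nonempty_Icc.2 (by norm_num))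
      (f.continuousOn (s := Icc (-1 : ℝ) 1))
    refine ⟨f.eval x₀, ?_⟩
    rintro v ⟨τ, hτ, hτ1, rfl⟩
    calc f.eval x₀ = ∫ x in Icc (-1 : ℝ) 1, f.eval x₀ * τ.eval x := by
          rw [integral_const_mul, hτ1, mul_one]
      _ ≤ ∫ x in Icc (-1 : ℝ) 1, f.eval x * τ.eval x :=
          setIntegral_mono_on (Continuous.integrableOn_Icc (by fun_prop))
            (Continuous.integrableOn_Icc (by fun_prop)) measurableSet_Icc
            fun x hx ↦ mul_le_mul_of_nonneg_right (hx₀ hx) (hτ.eval_nonneg x)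
  · simp only [eval_C_mul]
    rw [integral_const_mul, inv_mul_cancel₀ hpos.ne']
  · simp only [eval_C_mul, mul_left_comm _ I⁻¹]
    rw [integral_const_mul, div_eq_inv_mul]

/-- The integration functional `p ↦ ∫ p(f(x)) dx` over `[-1, 1]`, that is, integration against the
push-forward under `f` of the Lebesgue measure. -/
def pushforwardIntegral (f : ℝ[X]) : ℝ[X] →ₗ[ℝ] ℝ where
  toFun p := ∫ x in Icc (-1 : ℝ) 1, p.eval (f.eval x)
  map_add' p q := by
    simp only [eval_add]
    exact integral_add (p.continuous.comp f.continuous).integrableOn_Icc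
      (q.continuous.comp f.continuous).integrableOn_Icc
  map_smul' c p := by
    simp only [eval_smul, smul_eq_mul, RingHom.id_apply]
    exact integral_const_mul _ _

lemma pushforwardIntegral_apply (f p : ℝ[X]) :
    pushforwardIntegral f p = ∫ x in Icc (-1 : ℝ) 1, p.eval (f.eval x) := rfl

lemma pushforwardIntegral_C_mul (f p : ℝ[X]) (c : ℝ) :
    pushforwardIntegral f (C c * p) = c * pushforwardIntegral f p := by
  rw [← smul_eq_C_mul, map_smul, smul_eq_mul]

lemma le_pfmBound1 {f : ℝ[X]} {r : ℕ} {c : ℝ}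
    (h : ∀ p : ℝ[X], p.natDegree ≤ r →
      c * pushforwardIntegral f (p ^ 2) ≤ pushforwardIntegral f (X * p ^ 2)) :
    c ≤ pfmBound1 f r := by
  refine le_csInf ?_ ?_
  · have hone : IsSOSUpTo (1 : ℝ[X]) r := by
      simpa using IsSOSUpTo.sq (p := 1) (r := r) (by simp)
    exact ⟨_, C (1 / 2) * 1, hone.C_mul (by norm_num), by norm_num, rfl⟩
  · rintro v ⟨s, ⟨m, p, hp, rfl⟩, hs, rfl⟩
    calc c = c * pushforwardIntegral f (∑ i, p i ^ 2) := by
          rw [pushforwardIntegral_apply, hs, mul_one]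
      _ = ∑ i, c * pushforwardIntegral f (p i ^ 2) := by rw [map_sum, Finset.mul_sum]
      _ ≤ ∑ i, pushforwardIntegral f (X * p i ^ 2) := Finset.sum_le_sum fun i _ ↦ h _ (hp i)
      _ = pushforwardIntegral f (X * ∑ i, p i ^ 2) := by rw [Finset.mul_sum, map_sum]
      _ = _ := by simp only [pushforwardIntegral_apply, eval_mul, eval_X]

/-! ### The upper estimate for the Lasserre bound -/

lemma eval_sin_chebyshevT (m : ℤ) (θ : ℝ) :
    (Chebyshev.T ℝ (4 * m + 1)).eval (Real.sin θ) = Real.sin ((4 * m + 1) * θ) := by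
  rw [← Real.cos_pi_div_two_sub, Chebyshev.T_real_cos, ← Real.cos_pi_div_two_sub,
    ← Real.cos_add_int_mul_two_pi (Real.pi / 2 - (4 * m + 1) * θ) m]
  push_cast
  ring_nf

/-- The polynomial `T_N(x) / x` for `N = 4m + 1`. Restricting to `N ≡ 1 mod 4` makes `T_N` odd and
its value at `sin θ` equal to `sin (N θ)`, without a sign. -/
def chebyshevQuotient (m : ℕ) : ℝ[X] := (Chebyshev.T ℝ (4 * m + 1)).divX

lemma natDegree_chebyshevQuotient (m : ℕ) : (chebyshevQuotient m).natDegree = 4 * m := by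
  rw [chebyshevQuotient, natDegree_divX_eq_natDegree_tsub_one, Chebyshev.natDegree_T]
  omega

lemma mul_eval_chebyshevQuotient (m : ℕ) (x : ℝ) :
    x * (chebyshevQuotient m).eval x = (Chebyshev.T ℝ (4 * m + 1)).eval x := by
  have hzero : (Chebyshev.T ℝ (4 * m + 1)).coeff 0 = 0 := by
    rw [coeff_zero_eq_eval_zero, Chebyshev.T_eval_zero_of_odd ℝ ⟨2 * m, by ring⟩]
  conv_rhs => rw [← divX_mul_X_add (Chebyshev.T ℝ (4 * m + 1)), hzero]
  simp [chebyshevQuotient, mul_comm]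

lemma abs_mul_eval_chebyshevQuotient_le_one (m : ℕ) {x : ℝ} (hx : |x| ≤ 1) :
    |x * (chebyshevQuotient m).eval x| ≤ 1 := by
  rw [mul_eval_chebyshevQuotient]
  exact Chebyshev.abs_eval_T_real_le_one _ hx

lemma half_le_eval_chebyshevQuotient (m : ℕ) {x : ℝ} (hx : 0 < x) (hxm : x ≤ 1 / (4 * m + 1)) :
    (4 * m + 1) / 2 ≤ (chebyshevQuotient m).eval x := by
  set N : ℝ := 4 * m + 1
  have hN : 1 ≤ N := by simp [N]
  have hNx : N * x ≤ 1 := by rwa [le_div_iff₀' (by linarith)] at hxm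
  have hx1 : x ≤ 1 := by nlinarith
  set θ := Real.arcsin x
  have hsin : Real.sin θ = x := Real.sin_arcsin (by linarith) hx1
  have hθ : 0 ≤ θ := Real.arcsin_nonneg.2 hx.le
  have hxθ : x ≤ θ := hsin ▸ Real.sin_le hθ
  have hNθ : N * θ ≤ Real.pi / 2 := by
    have hjordan : 2 / Real.pi * θ ≤ x :=
      hsin ▸ Real.mul_le_sin hθ (Real.arcsin_le_pi_div_two x)
    calc N * θ = Real.pi / 2 * (N * (2 / Real.pi * θ)) := by field_simp
      _ ≤ Real.pi / 2 * (N * x) := by gcongr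
      _ ≤ Real.pi / 2 := mul_le_of_le_one_right (by positivity) hNx
  have hpi : 1 / 2 ≤ 2 / Real.pi := by
    rw [div_le_div_iff₀ two_pos Real.pi_pos]
    linarith [Real.pi_le_four]
  refine le_of_mul_le_mul_left ?_ hx
  calc x * (N / 2) = 1 / 2 * (N * x) := by ring
    _ ≤ 2 / Real.pi * (N * θ) := by gcongr
    _ ≤ Real.sin (N * θ) := Real.mul_le_sin (by positivity) hNθ
    _ = x * (chebyshevQuotient m).eval x := by
      have hT := eval_sin_chebyshevT m θ
      rw [Int.cast_natCast] at hT
      rw [mul_eval_chebyshevQuotient, ← hT, hsin]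

lemma le_integral_chebyshevQuotient_pow_four (m : ℕ) :
    (4 * m + 1 : ℝ) ^ 3 / 16 ≤ ∫ x in Icc (-1 : ℝ) 1, (chebyshevQuotient m).eval x ^ 4 := by
  set N : ℝ := 4 * m + 1
  have hN0 : N ≠ 0 := by positivity
  have hN1 : 1 / N ≤ 1 := div_le_one_of_le₀ (by simp [N]) (by positivity)
  have hsub : Ioc 0 (1 / N) ⊆ Icc (-1 : ℝ) 1 :=
    Ioc_subset_Icc_self.trans (Icc_subset_Icc (by norm_num) hN1)
  have hint : IntegrableOn (fun x ↦ (chebyshevQuotient m).eval x ^ 4) (Icc (-1 : ℝ) 1) :=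
    Continuous.integrableOn_Icc (by fun_prop)
  calc N ^ 3 / 16 = ∫ _ in Ioc 0 (1 / N), (N / 2) ^ 4 := by
        rw [setIntegral_const, Real.volume_real_Ioc_of_le (by positivity), smul_eq_mul]
        field_simp
        norm_num
    _ ≤ ∫ x in Ioc 0 (1 / N), (chebyshevQuotient m).eval x ^ 4 :=
        setIntegral_mono_on (by simp) (hint.mono_set hsub) measurableSet_Ioc fun x hx ↦
          pow_le_pow_left₀ (by positivity) (half_le_eval_chebyshevQuotient m hx.1 hx.2) 4
    _ ≤ ∫ x in Icc (-1 : ℝ) 1, (chebyshevQuotient m).eval x ^ 4 :=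
        setIntegral_mono_set hint (.of_forall fun x ↦ by positivity) (.of_forall hsub)

lemma integral_pow_mul_chebyshevQuotient_pow_four_le {n : ℕ} (hn : 4 ≤ n) (m : ℕ) :
    ∫ x in Icc (-1 : ℝ) 1, x ^ n * (chebyshevQuotient m).eval x ^ 4 ≤ 2 := by
  have hle : ∀ x ∈ Icc (-1 : ℝ) 1, x ^ n * (chebyshevQuotient m).eval x ^ 4 ≤ 1 := by
    intro x hx
    have hx1 : |x| ≤ 1 := abs_le.2 hx
    calc x ^ n * (chebyshevQuotient m).eval x ^ 4
        ≤ |x| ^ n * |(chebyshevQuotient m).eval x| ^ 4 := by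
          rw [← abs_pow, ← abs_pow, ← abs_mul]
          exact le_abs_self _
      _ ≤ |x| ^ 4 * |(chebyshevQuotient m).eval x| ^ 4 := by
          gcongr ?_ * _
          exact pow_le_pow_of_le_one (abs_nonneg x) hx1 hn
      _ = |x * (chebyshevQuotient m).eval x| ^ 4 := by rw [abs_mul, mul_pow]
      _ ≤ 1 := pow_le_one₀ (abs_nonneg _) (abs_mul_eval_chebyshevQuotient_le_one m hx1)
  calc ∫ x in Icc (-1 : ℝ) 1, x ^ n * (chebyshevQuotient m).eval x ^ 4
      ≤ ∫ _ in Icc (-1 : ℝ) 1, (1 : ℝ) :=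
        setIntegral_mono_on (Continuous.integrableOn_Icc (by fun_prop)) (by simp)
          measurableSet_Icc hle
    _ = 2 := by norm_num

theorem lasserreBound1_X_pow_le {n : ℕ} (hn : 4 ≤ n) (r : ℕ) :
    lasserreBound1 (X ^ n) r ≤ 2 ^ 14 / (r + 1) ^ 3 := by
  set m := r / 8
  set q := chebyshevQuotient m
  have hq : IsSOSUpTo ((q ^ 2) ^ 2) r := .sq <| by
    rw [natDegree_pow, natDegree_chebyshevQuotient]
    omega
  have hden : (4 * m + 1 : ℝ) ^ 3 / 16 ≤ ∫ x in Icc (-1 : ℝ) 1, ((q ^ 2) ^ 2).eval x := by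
    simpa only [eval_pow, ← pow_mul] using le_integral_chebyshevQuotient_pow_four m
  have hnum : ∫ x in Icc (-1 : ℝ) 1, (X ^ n : ℝ[X]).eval x * ((q ^ 2) ^ 2).eval x ≤ 2 := by
    simpa only [eval_pow, eval_X, ← pow_mul] using
      integral_pow_mul_chebyshevQuotient_pow_four_le hn m
  have hr : (r + 1 : ℝ) / 8 ≤ 4 * m + 1 := by
    rw [div_le_iff₀' (by norm_num)]
    exact_mod_cast (by omega : r + 1 ≤ 8 * (4 * m + 1))
  calc lasserreBound1 (X ^ n) r ≤ _ :=
        lasserreBound1_le_div _ hq (lt_of_lt_of_le (by positivity) hden)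
    _ ≤ 2 / ((4 * m + 1) ^ 3 / 16) := by gcongr
    _ ≤ 2 / (((r + 1) / 8) ^ 3 / 16) := by gcongr
    _ = 2 ^ 14 / (r + 1) ^ 3 := by
        field_simp
        norm_num

/-! ### The quadratic form of a self-adjoint operator -/

lemma inner_map_self_le_of_hasEigenvalue_le {E : Type*} [NormedAddCommGroup E]
    [InnerProductSpace ℝ E] [FiniteDimensional ℝ E] {T : E →ₗ[ℝ] E} (hT : T.IsSymmetric) {c : ℝ}
    (hc : ∀ μ, Module.End.HasEigenvalue T μ → μ ≤ c) (x : E) :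
    inner ℝ (T x) x ≤ c * inner ℝ x x := by
  set e := hT.eigenvectorBasis rfl
  have hTe (i) : inner ℝ (T x) (e i) = hT.eigenvalues rfl i * inner ℝ x (e i) := by
    rw [hT, hT.apply_eigenvectorBasis, inner_smul_right]
    rfl
  rw [← e.sum_inner_mul_inner, ← e.sum_inner_mul_inner x x, Finset.mul_sum]
  refine Finset.sum_le_sum fun i _ ↦ ?_
  rw [hTe, real_inner_comm x (e i), mul_assoc]
  exact mul_le_mul_of_nonneg_right (hc _ (hT.hasEigenvalue_eigenvalues rfl i))
    (mul_self_nonneg _)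

lemma bilin_map_self_le_of_hasEigenvalue_le {V : Type*} [AddCommGroup V] [Module ℝ V]
    [FiniteDimensional ℝ V] {B : LinearMap.BilinForm ℝ V} (hB : B.IsSymm)
    (hpos : ∀ x, x ≠ 0 → 0 < B x x) {T : V →ₗ[ℝ] V} (hT : ∀ x y, B (T x) y = B x (T y)) {c : ℝ}
    (hc : ∀ μ, Module.End.HasEigenvalue T μ → μ ≤ c) (x : V) :
    B (T x) x ≤ c * B x x := by
  let core : InnerProductSpace.Core ℝ V :=
    { inner := fun x y ↦ B x y
      conj_inner_symm := fun x y ↦ hB.eq y x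
      re_inner_nonneg := fun x ↦ by
        rcases eq_or_ne x 0 with rfl | hx
        · simp
        · exact (hpos x hx).le
      add_left := fun x y z ↦ by simp
      smul_left := fun x y c ↦ by simp
      definite := fun x hx ↦ by
        by_contra hne
        exact (hpos x hne).ne' hx }
  let : NormedAddCommGroup V := core.toNormedAddCommGroup
  let : InnerProductSpace ℝ V := .ofCore core.toCore
  exact inner_map_self_le_of_hasEigenvalue_le (T := T) hT hc x

/-! ### The lower estimate for the push-forward bound -/

lemma pushforwardIntegral_pos {f p : ℝ[X]} (hf : f.natDegree ≠ 0) (hp : p ≠ 0)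
    (h : ∀ x ∈ Icc (-1 : ℝ) 1, 0 ≤ p.eval (f.eval x)) : 0 < pushforwardIntegral f p := by
  have hcomp : p.comp f ≠ 0 := by
    rw [Ne, comp_eq_zero_iff, not_or]
    exact ⟨hp, fun hC ↦ hf (by rw [hC.2, natDegree_C])⟩
  obtain ⟨x, hx, hpx⟩ : ∃ x ∈ Icc (-1 : ℝ) 1, (p.comp f).eval x ≠ 0 := by
    by_contra! hzero
    exact hcomp (eq_zero_of_infinite_isRoot _ ((Icc_infinite (by norm_num)).mono hzero))
  rw [eval_comp] at hpx
  rw [pushforwardIntegral_apply, integral_Icc_eq_integral_Ioc,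
    ← intervalIntegral.integral_of_le (by norm_num)]
  exact intervalIntegral.integral_pos (by norm_num) (p.continuous.comp f.continuous).continuousOn
    (fun y hy ↦ h y (Ioc_subset_Icc_self hy)) ⟨x, hx, (h x hx).lt_of_ne' hpx⟩

/-- The bilinear form `(p, q) ↦ ∫ t p(t) q(t)` for the push-forward measure under `f`. When
`f = X ^ b` this is, up to a factor, the inner product with weight `t^(1/b)` on `[0, 1]`. -/
def pushforwardBilin (f : ℝ[X]) : LinearMap.BilinForm ℝ ℝ[X] :=
  (LinearMap.mul ℝ ℝ[X]).compr₂ (pushforwardIntegral f ∘ₗ LinearMap.mulLeft ℝ X)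

lemma pushforwardBilin_apply (f p q : ℝ[X]) :
    pushforwardBilin f p q = pushforwardIntegral f (X * (p * q)) := rfl

lemma pushforwardBilin_comm (f p q : ℝ[X]) :
    pushforwardBilin f p q = pushforwardBilin f q p := by
  rw [pushforwardBilin_apply, pushforwardBilin_apply, mul_comm p]

/-- `b` times the Jacobi operator `p ↦ -t^(-a) (t^(1 + a) (1 - t) p')'` with `a = 1/b`; the factor
`b` keeps the coefficients integral. -/
def jacobiOperator (b : ℕ) : ℝ[X] →ₗ[ℝ] ℝ[X] where
  toFun p := (b : ℝ[X]) * X * derivative p - ((b : ℝ[X]) + 1) * (1 - X) * derivative p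
    - (b : ℝ[X]) * X * (1 - X) * derivative (derivative p)
  map_add' p q := by
    simp only [derivative_add]
    ring
  map_smul' c p := by
    simp only [smul_eq_C_mul, derivative_C_mul, RingHom.id_apply]
    ring

lemma jacobiOperator_apply (b : ℕ) (p : ℝ[X]) :
    jacobiOperator b p = (b : ℝ[X]) * X * derivative p - ((b : ℝ[X]) + 1) * (1 - X) * derivative p
      - (b : ℝ[X]) * X * (1 - X) * derivative (derivative p) := rfl

lemma coeff_jacobiOperator (b n : ℕ) (p : ℝ[X]) :
    (jacobiOperator b p).coeff n = n * (b * (n + 1) + 1) * p.coeff n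
      - (n + 1) * (b * (n + 1) + 1) * p.coeff (n + 1) := by
  have hexpand : jacobiOperator b p = (b : ℝ[X]) * (X * derivative p)
      - ((b + 1 : ℕ) : ℝ[X]) * derivative p + ((b + 1 : ℕ) : ℝ[X]) * (X * derivative p)
      - (b : ℝ[X]) * (X * derivative (derivative p))
      + (b : ℝ[X]) * (X * (X * derivative (derivative p))) := by
    rw [jacobiOperator_apply]
    push_cast
    ring
  rw [hexpand]
  simp only [coeff_add, coeff_sub, coeff_natCast_mul]
  rcases n with _ | _ | n
  · simp [coeff_derivative]
  · simp [coeff_derivative, coeff_X_mul]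
    ring
  · simp only [coeff_X_mul, coeff_derivative]
    push_cast
    ring

lemma jacobiOperator_mem_degreeLT (b : ℕ) {n : ℕ} {p : ℝ[X]} (hp : p ∈ degreeLT ℝ n) :
    jacobiOperator b p ∈ degreeLT ℝ n := by
  rw [mem_degreeLT, degree_lt_iff_coeff_zero] at hp ⊢
  intro i hi
  rw [coeff_jacobiOperator, hp i hi, hp (i + 1) (by omega), mul_zero, mul_zero, sub_zero]

lemma eigenvalue_jacobiOperator {b : ℕ} {μ : ℝ} {p : ℝ[X]} (hp : p ≠ 0)
    (h : jacobiOperator b p = μ • p) :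
    μ = p.natDegree * (b * (p.natDegree + 1) + 1) := by
  have hcoeff := congr_arg (coeff · p.natDegree) h
  simp only [coeff_jacobiOperator, coeff_smul, smul_eq_mul, mul_zero, sub_zero,
    coeff_eq_zero_of_natDegree_lt (Nat.lt_succ_self p.natDegree)] at hcoeff
  exact (mul_right_cancel₀ (leadingCoeff_ne_zero.2 hp) hcoeff).symm

lemma pushforwardIntegral_X_pow_nonneg {b : ℕ} (hb : Even b) {p : ℝ[X]}
    (h : ∀ t ∈ Icc (0 : ℝ) 1, 0 ≤ p.eval t) : 0 ≤ pushforwardIntegral (X ^ b) p := by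
  refine setIntegral_nonneg measurableSet_Icc fun x hx ↦ h _ ?_
  rw [eval_pow, eval_X]
  exact ⟨hb.pow_nonneg x, hb.pow_abs x ▸ pow_le_one₀ (abs_nonneg x) (abs_le.2 hx)⟩

lemma pushforwardIntegral_X_pow_add_mul_derivative {b : ℕ} (hb : Even b) (q : ℝ[X]) :
    pushforwardIntegral (X ^ b) (q + (b : ℝ[X]) * X * derivative q) = 2 * q.eval 1 := by
  -- The integrand is the derivative of `x * q (x ^ b)`.
  have hderiv (x : ℝ) : HasDerivAt (fun x : ℝ ↦ x * q.eval (x ^ b))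
      ((q + (b : ℝ[X]) * X * derivative q).eval (x ^ b)) x := by
    have hcomp : HasDerivAt (fun x : ℝ ↦ q.eval (x ^ b))
        ((derivative q).eval (x ^ b) * (b * x ^ (b - 1))) x :=
      (q.hasDerivAt (x ^ b)).comp x (hasDerivAt_pow b x)
    refine ((hasDerivAt_id' x).fun_mul hcomp).congr_deriv ?_
    simp only [eval_add, eval_mul, eval_natCast, eval_X]
    rcases b with _ | b
    · simp
    · rw [Nat.add_sub_cancel, pow_succ]
      ring
  have hcont : Continuous fun x : ℝ ↦ (q + (b : ℝ[X]) * X * derivative q).eval (x ^ b) := by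
    fun_prop
  simp only [pushforwardIntegral_apply, eval_pow, eval_X]
  rw [integral_Icc_eq_integral_Ioc, ← intervalIntegral.integral_of_le (by norm_num),
    intervalIntegral.integral_eq_sub_of_hasDerivAt (fun x _ ↦ hderiv x)
      (hcont.intervalIntegrable _ _), hb.neg_one_pow, one_pow]
  ring

lemma pushforwardBilin_jacobiOperator {b : ℕ} (hb : Even b) (p q : ℝ[X]) :
    pushforwardBilin (X ^ b) (jacobiOperator b p) q =
      b * pushforwardIntegral (X ^ b) (X ^ 2 * (1 - X) * (derivative p * derivative q)) := by
  have hparts := pushforwardIntegral_X_pow_add_mul_derivative hb (X * (1 - X) * derivative p * q)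
  rw [show eval 1 (X * (1 - X) * derivative p * q) = 0 by simp, mul_zero] at hparts
  rw [← sub_eq_zero, ← neg_eq_zero, ← hparts, pushforwardBilin_apply,
    ← pushforwardIntegral_C_mul, ← map_sub, ← map_neg, jacobiOperator_apply]
  congr 1
  simp only [derivative_mul, derivative_X, derivative_sub, derivative_one, map_natCast]
  ring

lemma pushforwardBilin_jacobiOperator_comm {b : ℕ} (hb : Even b) (p q : ℝ[X]) :
    pushforwardBilin (X ^ b) (jacobiOperator b p) q =
      pushforwardBilin (X ^ b) p (jacobiOperator b q) := by
  rw [pushforwardBilin_comm _ p, pushforwardBilin_jacobiOperator hb,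
    pushforwardBilin_jacobiOperator hb, mul_comm (derivative p)]

lemma pushforwardBilin_X_pow_self_pos {b : ℕ} (hb : Even b) (hb0 : b ≠ 0) {p : ℝ[X]}
    (hp : p ≠ 0) : 0 < pushforwardBilin (X ^ b) p p := by
  rw [pushforwardBilin_apply]
  refine pushforwardIntegral_pos (by simpa using hb0)
    (mul_ne_zero X_ne_zero (mul_ne_zero hp hp)) fun x _ ↦ ?_
  simp only [eval_mul, eval_X, eval_pow]
  exact mul_nonneg (hb.pow_nonneg x) (mul_self_nonneg _)

lemma pushforwardBilin_jacobiOperator_self_le {b : ℕ} (hb : Even b) (hb0 : b ≠ 0) {p : ℝ[X]}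
    {n : ℕ} (hp : p.natDegree ≤ n) :
    pushforwardBilin (X ^ b) (jacobiOperator b p) p ≤
      n * (b * (n + 1) + 1) * pushforwardBilin (X ^ b) p p := by
  let T : degreeLT ℝ (n + 1) →ₗ[ℝ] degreeLT ℝ (n + 1) :=
    (jacobiOperator b).restrict fun _ ↦ jacobiOperator_mem_degreeLT b
  let B := (pushforwardBilin (X ^ b)).restrict (degreeLT ℝ (n + 1))
  have hB : B.IsSymm := ⟨fun x y ↦ pushforwardBilin_comm _ _ _⟩
  have hpos (v) (hv : v ≠ 0) : 0 < B v v :=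
    pushforwardBilin_X_pow_self_pos hb hb0 (Submodule.coe_eq_zero.not.2 hv)
  have hsymm (v w) : B (T v) w = B v (T w) := pushforwardBilin_jacobiOperator_comm hb v w
  have heigen (μ) (hμ : Module.End.HasEigenvalue T μ) : μ ≤ n * (b * (n + 1) + 1) := by
    obtain ⟨v, hv, hv0⟩ := hμ.exists_hasEigenvector
    have hv0' : (v : ℝ[X]) ≠ 0 := Submodule.coe_eq_zero.not.2 hv0
    have hv' : jacobiOperator b v = μ • (v : ℝ[X]) :=
      congr_arg Subtype.val (Module.End.mem_eigenspace_iff.1 hv)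
    have hdeg : (v : ℝ[X]).natDegree ≤ n :=
      Nat.le_of_lt_succ ((natDegree_lt_iff_degree_lt hv0').2 (mem_degreeLT.1 v.2))
    rw [eigenvalue_jacobiOperator hv0' hv']
    gcongr
  have hpW : p ∈ degreeLT ℝ (n + 1) := mem_degreeLT.2 <|
    degree_le_natDegree.trans_lt (by exact_mod_cast Nat.lt_succ_of_le hp)
  exact bilin_map_self_le_of_hasEigenvalue_le hB hpos hsymm heigen ⟨p, hpW⟩

lemma pushforwardIntegral_sq_le_hardy {b : ℕ} (hb : Even b) (p : ℝ[X]) :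
    pushforwardIntegral (X ^ b) (p ^ 2) ≤
      4 * b * pushforwardBilin (X ^ b) (jacobiOperator b p) p +
        (2 * b + 1) * pushforwardBilin (X ^ b) p p := by
  -- Expand `0 ≤ ∫ (1 - t) (p + 2b t p')²` and integrate the cross term by parts.
  have hparts := pushforwardIntegral_X_pow_add_mul_derivative hb ((1 - X) * p ^ 2)
  rw [show eval 1 ((1 - X) * p ^ 2) = 0 by simp, mul_zero] at hparts
  have hsquare : 0 ≤
      pushforwardIntegral (X ^ b) ((1 - X) * (p + C (2 * b : ℝ) * X * derivative p) ^ 2) := by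
    refine pushforwardIntegral_X_pow_nonneg hb fun t ht ↦ ?_
    rw [eval_mul, eval_sub, eval_one, eval_X, eval_pow]
    exact mul_nonneg (sub_nonneg.2 ht.2) (sq_nonneg _)
  have hexpand : (1 - X) * (p + C (2 * b : ℝ) * X * derivative p) ^ 2 =
      C 2 * ((1 - X) * p ^ 2 + (b : ℝ[X]) * X * derivative ((1 - X) * p ^ 2))
        + C (4 * b ^ 2 : ℝ) * (X ^ 2 * (1 - X) * (derivative p * derivative p))
        + C (2 * b + 1 : ℝ) * (X * (p * p)) - p ^ 2 := by
    simp only [derivative_mul, derivative_sub, derivative_one, derivative_X, pow_two, map_add,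
      map_mul, map_natCast, map_ofNat, map_one]
    ring
  rw [hexpand, map_sub, map_add, map_add, pushforwardIntegral_C_mul, hparts,
    pushforwardIntegral_C_mul, pushforwardIntegral_C_mul] at hsquare
  rw [pushforwardBilin_jacobiOperator hb, pushforwardBilin_apply]
  linarith

lemma pushforwardIntegral_sq_le {b : ℕ} (hb : Even b) (hb0 : b ≠ 0) {p : ℝ[X]} {n : ℕ}
    (hp : p.natDegree ≤ n) :
    pushforwardIntegral (X ^ b) (p ^ 2) ≤
      (2 * b * n + 1) * (2 * b * (n + 1) + 1) * pushforwardIntegral (X ^ b) (X * p ^ 2) := by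
  rw [pow_two, ← pushforwardBilin_apply, ← pow_two]
  calc pushforwardIntegral (X ^ b) (p ^ 2)
      ≤ 4 * b * pushforwardBilin (X ^ b) (jacobiOperator b p) p +
        (2 * b + 1) * pushforwardBilin (X ^ b) p p := pushforwardIntegral_sq_le_hardy hb p
    _ ≤ 4 * b * (n * (b * (n + 1) + 1) * pushforwardBilin (X ^ b) p p) +
        (2 * b + 1) * pushforwardBilin (X ^ b) p p := by
      gcongr
      exact pushforwardBilin_jacobiOperator_self_le hb hb0 hp
    _ = (2 * b * n + 1) * (2 * b * (n + 1) + 1) * pushforwardBilin (X ^ b) p p := by ring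

theorem one_div_le_pfmBound1_X_pow {b : ℕ} (hb : Even b) (hb0 : b ≠ 0) (r : ℕ) :
    1 / ((2 * b * r + 1) * (2 * b * (r + 1) + 1)) ≤ pfmBound1 (X ^ b) r := by
  refine le_pfmBound1 fun p hp ↦ ?_
  rw [one_div_mul_eq_div, div_le_iff₀' (by positivity)]
  exact pushforwardIntegral_sq_le hb hb0 hp

/-- Separation between the bounds `f^(r)` and `f_pfm^(r)` for `f(x) = x^(2k)`,
`k ≥ 2`, on `[-1,1]`: for every `M > 0` one has `f_pfm^(r) ≥ M·f^(r)` for all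
sufficiently large `r`. -/
theorem pfm_lasserre_separation (k : ℕ) (hk : 2 ≤ k) :
    ∀ M > (0 : ℝ), ∃ r₀ : ℕ, ∀ r : ℕ, r₀ ≤ r →
      M * lasserreBound1 (X ^ (2 * k)) r ≤ pfmBound1 (X ^ (2 * k)) r := by
  intro M hM
  set B : ℝ := 2 * (2 * k : ℕ) + 1
  obtain ⟨r₀, hr₀⟩ := exists_nat_ge (2 ^ 14 * M * B ^ 2)
  refine ⟨r₀, fun r hr ↦ ?_⟩
  have hlarge : 2 ^ 14 * M * B ^ 2 ≤ r + 1 := by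
    linarith [(Nat.cast_le (α := ℝ)).2 hr]
  calc M * lasserreBound1 (X ^ (2 * k)) r
      ≤ M * (2 ^ 14 / ((r : ℝ) + 1) ^ 3) := by
        gcongr
        exact lasserreBound1_X_pow_le (by omega) r
    _ ≤ 1 / (B * ((r : ℝ) + 1)) ^ 2 := by
        rw [mul_div_assoc', div_le_div_iff₀ (by positivity) (by positivity)]
        calc M * 2 ^ 14 * (B * ((r : ℝ) + 1)) ^ 2
            = 2 ^ 14 * M * B ^ 2 * ((r : ℝ) + 1) ^ 2 := by ring
          _ ≤ ((r : ℝ) + 1) * ((r : ℝ) + 1) ^ 2 := by gcongr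
          _ = 1 * ((r : ℝ) + 1) ^ 3 := by ring
    _ ≤ 1 / ((2 * (2 * k : ℕ) * r + 1) * (2 * (2 * k : ℕ) * ((r : ℝ) + 1) + 1)) := by
        rw [sq]
        gcongr <;> nlinarith
    _ ≤ pfmBound1 (X ^ (2 * k)) r := one_div_le_pfmBound1_X_pow (even_two_mul k) (by omega) r
end
end
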